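/- arXiv:1505.00459 — 3 statements merged into one kernel-verified Lean document; each statement's English description precedes it below -/
import Mathlib

section
/- Let ‖·‖ be a norm on ℝ² whose unit sphere S = {x ∈ ℝ² : ‖x‖ = 1} contains no line segment [c, d] with c, d ∈ S and ‖c − d‖ > 1. Then every map φ : ℝ² → ℝ² satisfying ‖φ(x) − φ(y)‖ = 1 whenever ‖x − y‖ = 1 is an affine isometry. -/
section AleksandrovAux

variable {E : Type*} [NormedAddCommGroup E] [NormedSpace ℝ E]

/-- An antisymmetric form playing the role of the determinant. -/
structure AreaForm (ω : E →ₗ[ℝ] E →ₗ[ℝ] ℝ) : Prop where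
  anti : ∀ x y, ω x y = - ω y x
  par : ∀ e f, e ≠ 0 → ω e f = 0 → ∃ t : ℝ, f = t • e
  cont : Continuous fun p : E × E => ω p.1 p.2

lemma AreaForm.self {ω : E →ₗ[ℝ] E →ₗ[ℝ] ℝ} (h : AreaForm ω) (x : E) : ω x x = 0 := by
  have := h.anti x x
  linarith

/-- Convexity of the norm in a convenient form. -/
lemma norm_comb {u v w : E} {a b : ℝ} (ha : 0 ≤ a) (hb : 0 ≤ b) (h : v = a • u + b • w) :
    ‖v‖ ≤ a * ‖u‖ + b * ‖w‖ := by
  rw [h]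
  refine (norm_add_le _ _).trans ?_
  rw [norm_smul, norm_smul, Real.norm_of_nonneg ha, Real.norm_of_nonneg hb]

/-- If three consecutive points on a line have norm one, the first and last are not far apart. -/
lemma no_shift (hS : ∀ c d : E, (∀ x ∈ segment ℝ c d, ‖x‖ = 1) → ‖c - d‖ ≤ 1)
    {e f : E} {t : ℝ} (he : ‖e‖ = 1) (hf : ‖f‖ = 1) (hfe : ‖f - e‖ = 1)
    (hft : ‖f + t • e‖ = 1) : t ≤ 0 := by
  by_contra! ht
  have hseg : ∀ x ∈ segment ℝ (f - e) (f + t • e), ‖x‖ = 1 := by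
    rintro x ⟨a, b, ha, hb, hab, rfl⟩
    have hle : ‖a • (f - e) + b • (f + t • e)‖ ≤ 1 := by
      have := norm_comb ha hb (rfl : a • (f - e) + b • (f + t • e) = _)
      rw [hfe, hft] at this
      linarith
    refine le_antisymm hle ?_
    set s : ℝ := b * t - a with hs
    have hx : a • (f - e) + b • (f + t • e) = f + s • e := by
      have : a = 1 - b := by linarith
      rw [hs, this]
      module
    rw [hx]
    rcases le_or_gt 0 s with h0 | h0
    · have h1 : f = (s / (1 + s)) • (f - e) + (1 / (1 + s)) • (f + s • e) := by
        have h3 : (1 : ℝ) + s ≠ 0 := by positivity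
        match_scalars <;> field_simp <;> ring
      have h2 := norm_comb (by positivity) (by positivity) h1
      rw [hf, hfe] at h2
      have h3 : (0 : ℝ) < 1 + s := by positivity
      have h4 : s / (1 + s) * 1 + 1 / (1 + s) * ‖f + s • e‖ = (s + ‖f + s • e‖) / (1 + s) := by
        field_simp
      rw [h4, le_div_iff₀ h3] at h2
      linarith
    · have h3 : (0 : ℝ) < t - s := by linarith
      have h1 : f = ((-s) / (t - s)) • (f + t • e) + (t / (t - s)) • (f + s • e) := by
        have h3' := h3.ne'
        match_scalars <;> field_simp <;> ring
      have h2 := norm_comb (div_nonneg (by linarith) h3.le) (div_nonneg ht.le h3.le) h1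
      rw [hf, hft] at h2
      have h4 : -s / (t - s) * 1 + t / (t - s) * ‖f + s • e‖
          = (-s + t * ‖f + s • e‖) / (t - s) := by
        field_simp
      rw [h4, le_div_iff₀ h3] at h2
      nlinarith
  have h := hS _ _ hseg
  have h5 : f - e - (f + t • e) = (-(1 + t)) • e := by module
  rw [h5, norm_smul, he, norm_neg, Real.norm_of_nonneg (by linarith)] at h
  linarith

variable {ω : E →ₗ[ℝ] E →ₗ[ℝ] ℝ}

lemma uniq_aux (hS : ∀ c d : E, (∀ x ∈ segment ℝ c d, ‖x‖ = 1) → ‖c - d‖ ≤ 1)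
    (hω : AreaForm ω) {e f g : E} (he : ‖e‖ = 1) (hf : ‖f‖ = 1) (hfe : ‖f - e‖ = 1)
    (hg : ‖g‖ = 1) (hge : ‖g - e‖ = 1) (pf : 0 < ω e f) (pg : 0 < ω e g)
    (hle : ω e g ≤ ω e f) : g = f := by
  have he0 : e ≠ 0 := by rintro rfl; simp at he
  obtain ⟨l, hl⟩ : ∃ l, l = ω e g / ω e f := ⟨_, rfl⟩
  have hl0 : 0 < l := by rw [hl]; positivity
  have hl1 : l ≤ 1 := by rw [hl]; exact (div_le_one pf).2 hle
  obtain ⟨t, ht⟩ := hω.par e (g - l • f) he0 (by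
    rw [map_sub, map_smul, hl, smul_eq_mul]
    field_simp
    ring)
  have hgt : g = l • f + t • e := by rw [← ht]; module
  rcases hl1.lt_or_eq with h1 | h1
  · exfalso
    have p0 : ‖l • f‖ = l := by rw [norm_smul, hf, Real.norm_of_nonneg hl0.le, mul_one]
    have pm : ‖l • f - e‖ ≤ 1 := by
      have := norm_comb (v := l • f - e) (u := f - e) (w := -e) hl0.le
        (by linarith : 0 ≤ 1 - l) (by module)
      rw [norm_neg, he, hfe] at this
      linarith
    have pt1 : ‖l • f + (t - 1) • e‖ = 1 := by
      refine Eq.trans ?_ hge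
      rw [hgt]; congr 1; module
    have pt : ‖l • f + t • e‖ = 1 := by rw [← hgt, hg]
    rcases le_or_gt t 0 with h | h
    · have h3 : (0 : ℝ) < 1 - t := by linarith
      have h4 : l • f + t • e = (-t / (1 - t)) • (l • f + (t - 1) • e) + (1 / (1 - t)) • (l • f) := by
        have := h3.ne'
        match_scalars <;> field_simp <;> ring
      have h5 := norm_comb (div_nonneg (by linarith) h3.le) (div_nonneg (by norm_num) h3.le) h4
      rw [pt, pt1, p0] at h5
      have h6 : -t / (1 - t) * 1 + 1 / (1 - t) * l = (-t + l) / (1 - t) := by field_simp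
      rw [h6, le_div_iff₀ h3] at h5
      linarith
    · rcases lt_or_ge t 1 with h' | h'
      · have h5 := norm_comb (v := l • f + (t - 1) • e) (u := l • f - e) (w := l • f)
          (by linarith : 0 ≤ 1 - t) h.le (by module)
        rw [pt1, p0] at h5
        nlinarith
      · have h4 : l • f + (t - 1) • e = ((t - 1) / t) • (l • f + t • e) + (1 / t) • (l • f) := by
          have := h.ne'
          match_scalars <;> field_simp <;> ring
        have h5 := norm_comb (div_nonneg (by linarith) h.le) (div_nonneg (by norm_num) h.le) h4
        rw [pt, pt1, p0] at h5
        have h6 : (t - 1) / t * 1 + 1 / t * l = (t - 1 + l) / t := by field_simp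
        rw [h6, le_div_iff₀ h] at h5
        linarith
  · rw [h1, one_smul] at hgt
    have a1 : t ≤ 0 := no_shift hS he hf hfe (by rw [← hgt, hg])
    have a2 : -t ≤ 0 := no_shift hS he hg hge (by rw [hgt, ← hf]; congr 1; module)
    have : t = 0 := by linarith
    rw [hgt, this]; simp

lemma uniq (hS : ∀ c d : E, (∀ x ∈ segment ℝ c d, ‖x‖ = 1) → ‖c - d‖ ≤ 1)
    (hω : AreaForm ω) {e f g : E} (he : ‖e‖ = 1) (hf : ‖f‖ = 1) (hfe : ‖f - e‖ = 1)
    (hg : ‖g‖ = 1) (hge : ‖g - e‖ = 1) (pf : 0 < ω e f) (pg : 0 < ω e g) : g = f := by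
  rcases le_total (ω e g) (ω e f) with h | h
  · exact uniq_aux hS hω he hf hfe hg hge pf pg h
  · exact (uniq_aux hS hω he hg hge hf hfe pg pf h).symm

lemma area_ne (hω : AreaForm ω) {e f : E} (he : ‖e‖ = 1) (hf : ‖f‖ = 1) (hfe : ‖f - e‖ = 1) :
    ω e f ≠ 0 := by
  intro h
  have he0 : e ≠ 0 := by rintro rfl; simp at he
  obtain ⟨t, rfl⟩ := hω.par e f he0 h
  have h1 : t • e - e = (t - 1) • e := by module
  rw [h1, norm_smul, he, mul_one, Real.norm_eq_abs] at hfe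
  rw [norm_smul, he, mul_one, Real.norm_eq_abs] at hf
  rcases abs_cases t with ⟨a, _⟩ | ⟨a, _⟩ <;> rcases abs_cases (t - 1) with ⟨b, _⟩ | ⟨b, _⟩ <;>
    linarith

lemma flip_props (hω : AreaForm ω) {e f : E} (hf : ‖f‖ = 1) (hfe : ‖f - e‖ = 1) :
    ‖e - f‖ = 1 ∧ ‖(e - f) - e‖ = 1 ∧ ω e (e - f) = - ω e f := by
  refine ⟨by rw [norm_sub_rev, hfe], ?_, ?_⟩
  · rw [← hf, ← norm_neg f]; congr 1; module
  · rw [map_sub, hω.self]; ring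

/-- There are at most two completions of a unit vector to an equilateral triangle. -/
lemma two_points (hS : ∀ c d : E, (∀ x ∈ segment ℝ c d, ‖x‖ = 1) → ‖c - d‖ ≤ 1)
    (hω : AreaForm ω) {e f g : E} (he : ‖e‖ = 1) (hf : ‖f‖ = 1) (hfe : ‖f - e‖ = 1)
    (hg : ‖g‖ = 1) (hge : ‖g - e‖ = 1) : g = f ∨ g = e - f := by
  have key : ∀ f' : E, ‖f'‖ = 1 → ‖f' - e‖ = 1 → 0 < ω e f' → g = f' ∨ g = e - f' := by
    intro f' h1 h2 h3
    rcases (area_ne hω he hg hge).lt_or_gt with h | h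
    · obtain ⟨k1, k2, k3⟩ := flip_props hω hg hge
      have := uniq hS hω he h1 h2 k1 k2 h3 (by linarith)
      right; rw [← this]; module
    · left; exact uniq hS hω he h1 h2 hg hge h3 h
  rcases (area_ne hω he hf hfe).lt_or_gt with h | h
  · obtain ⟨k1, k2, k3⟩ := flip_props hω hf hfe
    rcases key _ k1 k2 (by linarith) with h' | h'
    · right; exact h'
    · left; rw [h']; module
  · exact key f hf hfe h

/-- The long diagonal of a unit rhombus is longer than one. -/
lemma long_diag (hS : ∀ c d : E, (∀ x ∈ segment ℝ c d, ‖x‖ = 1) → ‖c - d‖ ≤ 1)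
    {e f : E} (he : ‖e‖ = 1) (hf : ‖f‖ = 1) (hfe : ‖f - e‖ = 1) :
    1 < ‖(2 : ℝ) • f - e‖ := by
  by_contra! hle
  have hge : 1 ≤ ‖(2 : ℝ) • f - e‖ := by
    have h := norm_sub_norm_le ((2 : ℝ) • f) e
    rw [norm_smul, hf, he] at h
    norm_num at h
    linarith
  have h1 : ‖(2 : ℝ) • f - e‖ = 1 := le_antisymm hle hge
  have h2 : ‖f - (f - e)‖ = 1 := by rw [← he]; congr 1; module
  have h3 : (1 : ℝ) ≤ 0 := no_shift hS hfe hf h2 (by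
    refine Eq.trans ?_ h1
    congr 1; module)
  linarith

/-- Intermediate values on the unit sphere. -/
lemma exists_unit_dist (hr : 1 < Module.rank ℝ E) {v : E} (hv0 : v ≠ 0) (hv : ‖v‖ ≤ 2) :
    ∃ u : E, ‖u‖ = 1 ∧ ‖v - u‖ = 1 := by
  have hp := isPreconnected_sphere hr (0 : E) 1
  have hn : 0 < ‖v‖ := norm_pos_iff.2 hv0
  have hm : ‖(‖v‖⁻¹ • v)‖ = 1 := by
    rw [norm_smul, norm_inv, norm_norm, inv_mul_cancel₀ hn.ne']
  have := hp.intermediate_value (a := ‖v‖⁻¹ • v) (b := -(‖v‖⁻¹ • v)) (f := fun u => ‖v - u‖)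
    (by simpa using hm) (by simpa using hm) (by fun_prop)
  have h1 : ‖v - ‖v‖⁻¹ • v‖ ≤ 1 := by
    have e1 : v - ‖v‖⁻¹ • v = (1 - ‖v‖⁻¹) • v := by module
    have e2 : |(1 - ‖v‖⁻¹) * ‖v‖| ≤ 1 := by
      rw [sub_mul, inv_mul_cancel₀ hn.ne', abs_le]
      constructor <;> linarith
    rwa [e1, norm_smul, Real.norm_eq_abs, ← abs_norm v, ← abs_mul, abs_norm]
  have h2 : 1 ≤ ‖v - -(‖v‖⁻¹ • v)‖ := by
    have e1 : v - -(‖v‖⁻¹ • v) = (1 + ‖v‖⁻¹) • v := by module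
    rw [e1, norm_smul, Real.norm_of_nonneg (by positivity), add_mul, inv_mul_cancel₀ hn.ne']
    linarith
  obtain ⟨u, hu, hu'⟩ := this ⟨h1, h2⟩
  exact ⟨u, by simpa using hu, hu'⟩

lemma exists_sum_units (hr : 1 < Module.rank ℝ E) {v : E} (hv : ‖v‖ ≤ 2) :
    ∃ u w : E, ‖u‖ = 1 ∧ ‖w‖ = 1 ∧ v = u + w := by
  by_cases hv0 : v = 0
  · have : Nontrivial E := by
      rw [← rank_pos_iff_nontrivial (R := ℝ)]
      exact lt_trans zero_lt_one hr
    obtain ⟨u, hu⟩ := exists_norm_eq E (zero_le_one' ℝ)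
    exact ⟨u, -u, hu, by rw [norm_neg, hu], by rw [hv0]; simp⟩
  · obtain ⟨u, h1, h2⟩ := exists_unit_dist hr hv0 hv
    exact ⟨u, v - u, h1, h2, by module⟩

lemma exists_triangle (hr : 1 < Module.rank ℝ E) (hω : AreaForm ω) {e : E} (he : ‖e‖ = 1) :
    ∃ f, ‖f‖ = 1 ∧ ‖f - e‖ = 1 ∧ 0 < ω e f := by
  have he0 : e ≠ 0 := by rintro rfl; simp at he
  obtain ⟨f, h1, h2⟩ := exists_unit_dist hr he0 (by linarith)
  rw [norm_sub_rev] at h2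
  rcases (area_ne hω he h1 h2).lt_or_gt with h | h
  · obtain ⟨k1, k2, k3⟩ := flip_props hω h1 h2
    exact ⟨e - f, k1, k2, by linarith⟩
  · exact ⟨f, h1, h2, h⟩

/-- The set of positively oriented equilateral triangles. -/
def Tri (ω : E →ₗ[ℝ] E →ₗ[ℝ] ℝ) : Set (E × E) :=
  {p | ‖p.1‖ = 1 ∧ ‖p.2‖ = 1 ∧ ‖p.2 - p.1‖ = 1 ∧ 0 ≤ ω p.1 p.2}

lemma tri_pos (hω : AreaForm ω) {p : E × E} (h : p ∈ Tri ω) : 0 < ω p.1 p.2 :=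
  lt_of_le_of_ne h.2.2.2 (area_ne hω h.1 h.2.1 h.2.2.1).symm

lemma tri_preconnected [FiniteDimensional ℝ E] (hr : 1 < Module.rank ℝ E)
    (hS : ∀ c d : E, (∀ x ∈ segment ℝ c d, ‖x‖ = 1) → ‖c - d‖ ≤ 1) (hω : AreaForm ω) :
    IsPreconnected (Tri ω) := by
  have : ProperSpace E := FiniteDimensional.proper ℝ E
  have hcl : IsClosed (Tri ω) := by
    refine IsClosed.inter (isClosed_eq (by fun_prop) (by fun_prop))
      (IsClosed.inter (isClosed_eq (by fun_prop) (by fun_prop))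
      (IsClosed.inter (isClosed_eq (by fun_prop) (by fun_prop))
      (isClosed_le (by fun_prop) hω.cont)))
  have hcomp : IsCompact (Tri ω) := by
    refine ((isCompact_sphere (0 : E) 1).prod (isCompact_sphere (0 : E) 1)).of_isClosed_subset
      hcl ?_
    rintro p ⟨h1, h2, -⟩
    exact ⟨by simpa using h1, by simpa using h2⟩
  have : CompactSpace (Tri ω) := isCompact_iff_compactSpace.1 hcomp
  let q : Tri ω → Metric.sphere (0 : E) 1 := fun p => ⟨p.1.1, by simpa using p.2.1⟩
  have hq : Continuous q := by fun_prop
  have hb : Function.Bijective q := by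
    constructor
    · rintro ⟨⟨e, f⟩, hp⟩ ⟨⟨e', f'⟩, hp'⟩ h
      have h' : e = e' := congrArg Subtype.val h
      subst h'
      have := uniq hS hω hp.1 hp.2.1 hp.2.2.1 hp'.2.1 hp'.2.2.1 (tri_pos hω hp) (tri_pos hω hp')
      simp only at this
      subst this
      rfl
    · rintro ⟨e, he⟩
      obtain ⟨f, h1, h2, h3⟩ := exists_triangle hr hω (e := e) (by simpa using he)
      exact ⟨⟨(e, f), by simpa using he, h1, h2, h3.le⟩, rfl⟩
  let h := Continuous.homeoOfEquivCompactToT2 (f := Equiv.ofBijective q hb) hq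
  have hs : PreconnectedSpace (Metric.sphere (0 : E) 1) :=
    isPreconnected_iff_preconnectedSpace.1 (isPreconnected_sphere hr _ _)
  rw [isPreconnected_iff_preconnectedSpace]
  exact h.symm.surjective.denseRange.preconnectedSpace h.symm.continuous

/-- Another long diagonal from the same point, at distance one. -/
lemma exists_rotated [FiniteDimensional ℝ E] (hr : 1 < Module.rank ℝ E)
    (hS : ∀ c d : E, (∀ x ∈ segment ℝ c d, ‖x‖ = 1) → ‖c - d‖ ≤ 1) (hω : AreaForm ω)
    {p : E × E} (hp : p ∈ Tri ω) :
    ∃ r ∈ Tri ω, ‖((2 : ℝ) • p.2 - p.1) - ((2 : ℝ) • r.2 - r.1)‖ = 1 := by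
  have hn : -p ∈ Tri ω := by
    obtain ⟨h1, h2, h3, h4⟩ := hp
    refine ⟨by simpa using h1, by simpa using h2, ?_, by simpa using h4⟩
    rw [← h3, ← norm_neg]; congr 1; simp only [Prod.fst_neg, Prod.snd_neg]; module
  have := (tri_preconnected hr hS hω).intermediate_value hp hn
    (f := fun r => ‖((2 : ℝ) • p.2 - p.1) - ((2 : ℝ) • r.2 - r.1)‖) (by fun_prop)
  have h2 : 1 ≤ ‖((2 : ℝ) • p.2 - p.1) - ((2 : ℝ) • (-p).2 - (-p).1)‖ := by
    have e1 : ((2 : ℝ) • p.2 - p.1) - ((2 : ℝ) • (-p).2 - (-p).1)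
        = (2 : ℝ) • ((2 : ℝ) • p.2 - p.1) := by
      simp only [Prod.fst_neg, Prod.snd_neg]; module
    have := long_diag hS hp.1 hp.2.1 hp.2.2.1
    rw [e1, norm_smul, Real.norm_of_nonneg (by norm_num)]
    linarith
  obtain ⟨r, h3, h4⟩ := this ⟨by simp, h2⟩
  exact ⟨r, h3, h4⟩

variable {φ : E → E}

lemma rhombus_or (hS : ∀ c d : E, (∀ x ∈ segment ℝ c d, ‖x‖ = 1) → ‖c - d‖ ≤ 1)
    (hω : AreaForm ω) (hφ : ∀ x y, ‖x - y‖ = 1 → ‖φ x - φ y‖ = 1)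
    {p : E × E} (hp : p ∈ Tri ω) (x : E) :
    φ (x + ((2 : ℝ) • p.2 - p.1)) = φ x ∨
      (φ (x + ((2 : ℝ) • p.2 - p.1)) + φ x = φ (x + p.2) + φ (x + p.2 - p.1) ∧
        1 < ‖φ (x + ((2 : ℝ) • p.2 - p.1)) - φ x‖) := by
  obtain ⟨e, f⟩ := p
  obtain ⟨h1, h2, h3, h4⟩ := hp
  simp only at h1 h2 h3 h4 ⊢
  have n1 : ‖φ (x + f) - φ (x + f - e)‖ = 1 := hφ _ _ (by rw [← h1]; congr 1; module)
  have n2 : ‖φ x - φ (x + f - e)‖ = 1 :=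
    hφ _ _ (by rw [← h3, ← norm_neg (f - e)]; congr 1; module)
  have n3 : ‖φ x - φ (x + f)‖ = 1 := hφ _ _ (by rw [← h2, ← norm_neg f]; congr 1; module)
  have n4 : ‖φ (x + ((2 : ℝ) • f - e)) - φ (x + f - e)‖ = 1 :=
    hφ _ _ (by rw [← h2]; congr 1; module)
  have n5 : ‖φ (x + ((2 : ℝ) • f - e)) - φ (x + f)‖ = 1 :=
    hφ _ _ (by rw [← h3]; congr 1; module)
  generalize φ (x + ((2 : ℝ) • f - e)) = D at *
  generalize φ (x + f - e) = B at *
  generalize φ (x + f) = A at *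
  generalize φ x = X at *
  have m5 : ‖(D - B) - (A - B)‖ = 1 := by rw [← n5]; congr 1; module
  have m3 : ‖(X - B) - (A - B)‖ = 1 := by rw [← n3]; congr 1; module
  rcases two_points hS hω n1 n2 m3 n4 m5 with h | h
  · left; exact sub_left_injective h
  · right
    have hD : D = A - X + B := by
      rw [← sub_add_cancel D B, h]; module
    refine ⟨by rw [hD]; module, ?_⟩
    have := long_diag hS n1 n4 m5
    have e1 : (2 : ℝ) • (D - B) - (A - B) = D - X := by rw [hD]; module
    rwa [e1] at this

lemma rhombus [FiniteDimensional ℝ E] (hr : 1 < Module.rank ℝ E)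
    (hS : ∀ c d : E, (∀ x ∈ segment ℝ c d, ‖x‖ = 1) → ‖c - d‖ ≤ 1)
    (hω : AreaForm ω) (hφ : ∀ x y, ‖x - y‖ = 1 → ‖φ x - φ y‖ = 1)
    {p : E × E} (hp : p ∈ Tri ω) (x : E) :
    φ (x + ((2 : ℝ) • p.2 - p.1)) + φ x = φ (x + p.2) + φ (x + p.2 - p.1) := by
  rcases rhombus_or hS hω hφ hp x with h | h
  · exfalso
    obtain ⟨r, hr', hd⟩ := exists_rotated hr hS hω hp
    have h1 : ‖φ (x + ((2 : ℝ) • p.2 - p.1)) - φ (x + ((2 : ℝ) • r.2 - r.1))‖ = 1 :=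
      hφ _ _ (by rw [← hd]; congr 1; module)
    rw [h, norm_sub_rev] at h1
    rcases rhombus_or hS hω hφ hr' x with k | k
    · rw [k] at h1; simp at h1
    · linarith [k.2]
  · exact h.1

lemma midpoint_step [FiniteDimensional ℝ E] (hr : 1 < Module.rank ℝ E)
    (hS : ∀ c d : E, (∀ x ∈ segment ℝ c d, ‖x‖ = 1) → ‖c - d‖ ≤ 1)
    (hω : AreaForm ω) (hφ : ∀ x y, ‖x - y‖ = 1 → ‖φ x - φ y‖ = 1)
    {e : E} (he : ‖e‖ = 1) (x : E) :
    φ (x + e + e) - φ (x + e) = φ (x + e) - φ x := by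
  obtain ⟨f, h1, h2, h3⟩ := exists_triangle hr hω he
  have t1 : (e - f, e) ∈ Tri ω := by
    refine ⟨by rw [norm_sub_rev, h2], he, by rw [← h1]; congr 1; module, ?_⟩
    have := hω.anti f e
    simp only [map_sub, LinearMap.sub_apply, hω.self]
    linarith
  have t2 : (f, f - e) ∈ Tri ω := by
    refine ⟨h1, h2, by rw [← he, ← norm_neg e]; congr 1; module, ?_⟩
    have := hω.anti f e
    simp only [map_sub, hω.self]
    linarith
  have r1 := rhombus hr hS hω hφ t1 x
  have r2 := rhombus hr hS hω hφ t2 (x + e + e)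
  simp only at r1 r2
  rw [show x + ((2 : ℝ) • e - (e - f)) = x + e + f by module,
    show x + e - (e - f) = x + f by module] at r1
  rw [show x + e + e + ((2 : ℝ) • (f - e) - f) = x + f by module,
    show x + e + e + (f - e) = x + e + f by module,
    show x + e + f - f = x + e by module] at r2
  have r3 : φ (x + e + e) = φ (x + e + f) + φ (x + e) - φ (x + f) := by rw [← r2]; module
  have r4 : φ (x + e + f) = φ (x + e) + φ (x + f) - φ x := by rw [← r1]; module
  rw [r3, r4]; module

lemma line_step (hm : ∀ e : E, ‖e‖ = 1 → ∀ x, φ (x + e + e) - φ (x + e) = φ (x + e) - φ x)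
    {e : E} (he : ‖e‖ = 1) (x : E) (n : ℕ) :
    φ (x + (n : ℝ) • e) = φ x + (n : ℝ) • (φ (x + e) - φ x) := by
  have hd : ∀ n : ℕ, φ (x + (n : ℝ) • e + e) - φ (x + (n : ℝ) • e) = φ (x + e) - φ x := by
    intro n
    induction n with
    | zero => simp
    | succ k ih =>
      rw [← ih]
      push_cast
      rw [show x + ((k : ℝ) + 1) • e = x + (k : ℝ) • e + e by module]
      exact hm e he _
  induction n with
  | zero => simp
  | succ k ih =>
    have := hd k
    push_cast
    rw [show x + ((k : ℝ) + 1) • e = x + (k : ℝ) • e + e by module, sub_eq_iff_eq_add.1 this, ih]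
    module

lemma parallel_step (hm : ∀ e : E, ‖e‖ = 1 → ∀ x, φ (x + e + e) - φ (x + e) = φ (x + e) - φ x)
    (hφ : ∀ x y, ‖x - y‖ = 1 → ‖φ x - φ y‖ = 1) {e u : E} (he : ‖e‖ = 1) (hu : ‖u‖ = 1) (x : E) :
    φ (x + u + e) - φ (x + u) = φ (x + e) - φ x := by
  by_contra hne
  set w := (φ (x + u + e) - φ (x + u)) - (φ (x + e) - φ x) with hw
  have hw0 : 0 < ‖w‖ := norm_pos_iff.2 (sub_ne_zero.2 hne)
  obtain ⟨n, hn⟩ := exists_nat_gt (2 / ‖w‖)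
  rw [div_lt_iff₀ hw0] at hn
  have h1 := line_step hm he x n
  have h2 := line_step hm he (x + u) n
  have h3 : ‖φ (x + u + (n : ℝ) • e) - φ (x + (n : ℝ) • e)‖ = 1 :=
    hφ _ _ (by rw [← hu]; congr 1; module)
  have h4 : ‖φ (x + u) - φ x‖ = 1 := hφ _ _ (by rw [← hu]; congr 1; module)
  have h5 : (n : ℝ) • w = (φ (x + u + (n : ℝ) • e) - φ (x + (n : ℝ) • e)) - (φ (x + u) - φ x) := by
    rw [h1, h2, hw]; module
  have h6 : ‖(n : ℝ) • w‖ ≤ 2 := by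
    rw [h5]
    refine (norm_sub_le _ _).trans ?_
    rw [h3, h4]; norm_num
  rw [norm_smul, Real.norm_of_nonneg (by positivity)] at h6
  linarith

lemma unit_induction (hr : 1 < Module.rank ℝ E) {P : E → Prop} (hu : ∀ u, ‖u‖ = 1 → P u)
    (hadd : ∀ u v, P u → P v → P (u + v)) (v : E) : P v := by
  have h2 : ∀ v : E, ‖v‖ ≤ 2 → P v := by
    intro v hv
    obtain ⟨u, w, h1, h2, rfl⟩ := exists_sum_units hr hv
    exact hadd _ _ (hu _ h1) (hu _ h2)
  have hn : ∀ (n : ℕ) (v : E), ‖v‖ ≤ 2 → P (((n : ℝ) + 1) • v) := by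
    intro n v hv
    induction n with
    | zero => simpa using h2 v hv
    | succ k ih =>
      push_cast
      rw [show ((k : ℝ) + 1 + 1) • v = ((k : ℝ) + 1) • v + v by module]
      exact hadd _ _ ih (h2 v hv)
  obtain ⟨n, hn'⟩ := exists_nat_gt ‖v‖
  have hpos : (0 : ℝ) < (n : ℝ) + 1 := by positivity
  have := hn n (((n : ℝ) + 1)⁻¹ • v) (by
    rw [norm_smul, norm_inv, Real.norm_of_nonneg hpos.le, inv_mul_le_iff₀ hpos]
    linarith)
  rwa [smul_smul, mul_inv_cancel₀ hpos.ne', one_smul] at this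

theorem aleksandrov_abstract [FiniteDimensional ℝ E] (hr : 1 < Module.rank ℝ E)
    (hS : ∀ c d : E, (∀ x ∈ segment ℝ c d, ‖x‖ = 1) → ‖c - d‖ ≤ 1)
    (hω : AreaForm ω) (hφ : ∀ x y, ‖x - y‖ = 1 → ‖φ x - φ y‖ = 1) :
    (∀ x y : E, ‖φ x - φ y‖ = ‖x - y‖) ∧
      ∃ (L : E →ₗ[ℝ] E) (t : E), ∀ x : E, φ x = L x + t := by
  have hm : ∀ e : E, ‖e‖ = 1 → ∀ x, φ (x + e + e) - φ (x + e) = φ (x + e) - φ x :=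
    fun e he x => midpoint_step hr hS hω hφ he x
  have h1 : ∀ v : E, ∀ e x : E, ‖e‖ = 1 → φ (x + v + e) - φ (x + v) = φ (x + e) - φ x := by
    refine unit_induction hr ?_ ?_
    · intro u hu e x he
      exact parallel_step hm hφ he hu x
    · intro u v hu hv e x he
      rw [← hu e x he, ← hv e (x + u) he, add_assoc x u v]
  have h2 : ∀ w : E, ∀ v : E, φ (v + w) = φ v + (φ w - φ 0) := by
    refine unit_induction hr ?_ ?_
    · intro e he v
      have := h1 v e 0 he
      simp only [zero_add] at this
      rw [← this]; module
    · intro u w hu hw v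
      rw [← add_assoc, hw, hu, hw u]; module
  let A : E →+ E :=
    { toFun := fun v => φ v - φ 0
      map_zero' := by simp
      map_add' := by
        intro x y
        rw [h2 y x]; module }
  have hA1 : ∀ u, ‖u‖ = 1 → ‖A u‖ = 1 := fun u hu => hφ u 0 (by simpa using hu)
  have hAc : Continuous A := by
    refine A.continuous_of_isBounded_nhds_zero (s := Metric.ball 0 2)
      (Metric.ball_mem_nhds _ (by norm_num)) ?_
    rw [isBounded_iff_forall_norm_le]
    refine ⟨2, ?_⟩
    rintro _ ⟨v, hv, rfl⟩
    obtain ⟨u, w, k1, k2, rfl⟩ := exists_sum_units hr (v := v) (by simpa using (mem_ball_zero_iff.1 hv).le)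
    rw [map_add]
    refine (norm_add_le _ _).trans ?_
    rw [hA1 _ k1, hA1 _ k2]; norm_num
  let L : E →L[ℝ] E := A.toRealLinearMap hAc
  have hL : ∀ x, L x = φ x - φ 0 := fun x => rfl
  have hLn : ∀ x, ‖L x‖ = ‖x‖ := by
    intro x
    by_cases hx : x = 0
    · simp [hx]
    · have hn : 0 < ‖x‖ := norm_pos_iff.2 hx
      have k : ‖L (‖x‖⁻¹ • x)‖ = 1 := hA1 _ (by
        rw [norm_smul, norm_inv, norm_norm, inv_mul_cancel₀ hn.ne'])
      rw [map_smul, norm_smul, norm_inv, norm_norm, inv_mul_eq_one₀ hn.ne'] at k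
      exact k.symm
  refine ⟨fun x y => ?_, L.toLinearMap, φ 0, fun x => ?_⟩
  · rw [← hLn (x - y), map_sub, hL, hL]; congr 1; module
  · simp [hL]

end AleksandrovAux

/-- The determinant form on the plane. -/
noncomputable def planeForm : (ℝ × ℝ) →ₗ[ℝ] (ℝ × ℝ) →ₗ[ℝ] ℝ :=
  LinearMap.mk₂ ℝ (fun x y => x.1 * y.2 - x.2 * y.1)
    (by intros; simp; ring) (by intros; simp; ring) (by intros; simp; ring)
    (by intros; simp; ring)

lemma planeForm_par (e f : ℝ × ℝ) (he : e ≠ 0) (h : planeForm e f = 0) : ∃ t : ℝ, f = t • e := by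
  obtain ⟨a, b⟩ := e
  obtain ⟨c, d⟩ := f
  simp only [planeForm, LinearMap.mk₂_apply] at h
  by_cases ha : a = 0
  · have hb : b ≠ 0 := by rintro rfl; exact he (by simp [ha])
    refine ⟨d / b, ?_⟩
    subst ha
    have : c = 0 := by simpa [hb] using h
    ext <;> simp [this, hb]
  · refine ⟨c / a, ?_⟩
    ext
    · simp [ha]
    · simp only [Prod.smul_mk, smul_eq_mul]
      field_simp
      linarith

/-- Copy of the plane carrying no norm. -/
def Plane : Type := ℝ × ℝ

noncomputable instance : AddCommGroup Plane := inferInstanceAs (AddCommGroup (ℝ × ℝ))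
noncomputable instance : Module ℝ Plane := inferInstanceAs (Module ℝ (ℝ × ℝ))
instance : FiniteDimensional ℝ Plane := inferInstanceAs (FiniteDimensional ℝ (ℝ × ℝ))

lemma plane_rank : 1 < Module.rank ℝ Plane := by
  have h : Module.rank ℝ Plane = Module.rank ℝ (ℝ × ℝ) := rfl
  rw [h, rank_prod']
  simp only [Module.rank_self]
  norm_num


/-- `N` is a norm on `ℝ²`. -/
structure IsNorm (N : ℝ × ℝ → ℝ) : Prop where
  add_le : ∀ x y : ℝ × ℝ, N (x + y) ≤ N x + N y
  smul_eq : ∀ (c : ℝ) (x : ℝ × ℝ), N (c • x) = |c| * N x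
  eq_zero_of : ∀ x : ℝ × ℝ, N x = 0 → x = 0

/-- `N` is a URTC-norm: for every `a b` at `N`-distance `1`, there are exactly two
points `x` with `N (a - x) = 1` and `N (b - x) = 1`. -/
def IsURTC (N : ℝ × ℝ → ℝ) : Prop :=
  ∀ a b : ℝ × ℝ, N (a - b) = 1 →
    {x : ℝ × ℝ | N (a - x) = 1 ∧ N (b - x) = 1}.encard = 2

/-- If the unit sphere of `N` contains no segment whose endpoints are at distance `> 1`,
then every unit-distance preserving map is an affine isometry. -/
theorem aleksandrov_no_long_segment (N : ℝ × ℝ → ℝ) (hN : IsNorm N)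
    (hS : ¬ ∃ c d : ℝ × ℝ, N c = 1 ∧ N d = 1 ∧ 1 < N (c - d) ∧
      segment ℝ c d ⊆ {x : ℝ × ℝ | N x = 1})
    (φ : ℝ × ℝ → ℝ × ℝ)
    (hφ : ∀ x y : ℝ × ℝ, N (x - y) = 1 → N (φ x - φ y) = 1) :
    (∀ x y : ℝ × ℝ, N (φ x - φ y) = N (x - y)) ∧
      ∃ (L : (ℝ × ℝ) →ₗ[ℝ] (ℝ × ℝ)) (t : ℝ × ℝ), ∀ x : ℝ × ℝ, φ x = L x + t := by
  have h0 : N 0 = 0 := by simpa using hN.smul_eq 0 0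
  have hneg : ∀ x, N (-x) = N x := fun x => by simpa using hN.smul_eq (-1) x
  have hnn : ∀ x, 0 ≤ N x := fun x => by
    have h := hN.add_le x (-x)
    rw [add_neg_cancel, h0, hneg] at h
    linarith
  letI : Norm Plane := ⟨N⟩
  have core : NormedSpace.Core ℝ Plane :=
    { norm_nonneg := fun x => by
        exact hnn x
      norm_smul := fun c x => hN.smul_eq c x
      norm_triangle := fun x y => hN.add_le x y
      norm_eq_zero_iff := fun x => ⟨fun h => hN.eq_zero_of x h, fun h => by rw [h]; exact h0⟩ }
  letI : NormedAddCommGroup Plane := NormedAddCommGroup.ofCore core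
  letI : NormedSpace ℝ Plane := NormedSpace.ofCore core
  let ω : Plane →ₗ[ℝ] Plane →ₗ[ℝ] ℝ := planeForm
  have hω : AreaForm ω :=
    { anti := fun x y => by
        change x.1 * y.2 - x.2 * y.1 = -(y.1 * x.2 - y.2 * x.1)
        ring
      par := fun e f he h => planeForm_par e f he h
      cont := by
        let l1 : Plane →ₗ[ℝ] ℝ := LinearMap.fst ℝ ℝ ℝ
        let l2 : Plane →ₗ[ℝ] ℝ := LinearMap.snd ℝ ℝ ℝ
        have c1 : Continuous l1 := l1.continuous_of_finiteDimensional
        have c2 : Continuous l2 := l2.continuous_of_finiteDimensional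
        change Continuous fun p : Plane × Plane => l1 p.1 * l2 p.2 - l2 p.1 * l1 p.2
        fun_prop }
  have hS' : ∀ c d : Plane, (∀ x ∈ segment ℝ c d, ‖x‖ = 1) → ‖c - d‖ ≤ 1 := by
    intro c d h
    by_contra! hlt
    exact hS ⟨c, d, h c (left_mem_segment ℝ c d), h d (right_mem_segment ℝ c d), hlt, h⟩
  exact aleksandrov_abstract (E := Plane) (φ := φ) plane_rank hS' hω hφ
end

section
/- Let ‖·‖ be a strictly convex norm on ℝ². Then every map φ : ℝ² → ℝ² satisfying ‖φ(x) − φ(y)‖ = 1 whenever ‖x − y‖ = 1 is an affine isometry. -/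
section Aux

variable {E : Type*} [NormedAddCommGroup E] [NormedSpace ℝ E]

/-- isosceles triangles -/
theorem aux_isosceles (hr : 1 < Module.rank ℝ E) (x y : E) (s : ℝ) (hs : 0 < s)
    (h : ‖x - y‖ ≤ 2 * s) : ∃ z, ‖x - z‖ = s ∧ ‖y - z‖ = s := by
  rcases eq_or_ne x y with rfl | hne
  · have := (isConnected_sphere hr x hs.le).nonempty
    obtain ⟨z, hz⟩ := this
    refine ⟨z, ?_, ?_⟩ <;> rw [mem_sphere_iff_norm] at hz <;> rw [norm_sub_rev, hz]
  have hd : 0 < ‖x - y‖ := norm_pos_iff.2 (sub_ne_zero.2 hne)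
  have hc := (isConnected_sphere hr x hs.le).isPreconnected
  have e1 : ‖y - (x - (s / ‖x - y‖) • (x - y))‖ ≤ s := by
    have : y - (x - (s / ‖x - y‖) • (x - y)) = (s / ‖x - y‖ - 1) • (x - y) := by module
    rw [this, norm_smul, Real.norm_eq_abs]
    have h2 : |s / ‖x - y‖ - 1| * ‖x - y‖ = |s - ‖x - y‖| := by
      rw [← abs_of_pos hd, ← abs_mul, abs_of_pos hd]; congr 1; field_simp
    rw [h2, abs_le]; constructor <;> linarith
  have e2 : s ≤ ‖y - (x + (s / ‖x - y‖) • (x - y))‖ := by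
    have : y - (x + (s / ‖x - y‖) • (x - y)) = (-(s / ‖x - y‖ + 1)) • (x - y) := by module
    rw [this, norm_smul, Real.norm_eq_abs, abs_neg, abs_of_pos (by positivity), add_mul,
      div_mul_cancel₀ _ hd.ne']
    linarith
  have m1 : x - (s / ‖x - y‖) • (x - y) ∈ Metric.sphere x s := by
    rw [mem_sphere_iff_norm, sub_sub_cancel_left, norm_neg, norm_smul, Real.norm_eq_abs,
      abs_of_pos (by positivity), div_mul_cancel₀ _ hd.ne']
  have m2 : x + (s / ‖x - y‖) • (x - y) ∈ Metric.sphere x s := by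
    rw [mem_sphere_iff_norm, add_sub_cancel_left, norm_smul, Real.norm_eq_abs,
      abs_of_pos (by positivity), div_mul_cancel₀ _ hd.ne']
  obtain ⟨z, hz, hz2⟩ := hc.intermediate_value m1 m2 (f := fun z => ‖y - z‖)
    (by fun_prop) ⟨e1, e2⟩
  refine ⟨z, ?_, hz2⟩
  rw [mem_sphere_iff_norm] at hz
  rw [norm_sub_rev, hz]

/-- A point strictly between two points of the ball on a line is not on the sphere. -/
theorem aux_between [StrictConvexSpace ℝ E] (p u : E) (hu : u ≠ 0) (a b c : ℝ) (hab : a < b)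
    (hbc : b < c) (ha : ‖p + a • u‖ ≤ 1) (hc : ‖p + c • u‖ ≤ 1) : ‖p + b • u‖ < 1 := by
  have hne : p + a • u ≠ p + c • u := by
    intro h
    have h1 : a • u = c • u := add_left_cancel h
    have := smul_left_injective ℝ hu h1
    linarith
  have hac : 0 < c - a := by linarith
  have := norm_combo_lt_of_ne (a := (c - b) / (c - a)) (b := (b - a) / (c - a)) ha hc hne
    (div_pos (by linarith) hac) (div_pos (by linarith) hac) (by field_simp; ring)
  convert this using 2
  have h1 : (c - b) / (c - a) + (b - a) / (c - a) = 1 := by field_simp; ring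
  have h2 : (c - b) / (c - a) * a + (b - a) / (c - a) * c = b := by field_simp; ring
  calc p + b • u = ((c - b) / (c - a) + (b - a) / (c - a)) • p +
        ((c - b) / (c - a) * a + (b - a) / (c - a) * c) • u := by rw [h1, h2, one_smul]
    _ = _ := by module

theorem aux_unique1 [StrictConvexSpace ℝ E] (u v : E) (hu : ‖u‖ = 1) (hv : ‖v‖ = 1)
    (huv : ‖v - u‖ = 1) (α β : ℝ) (hβ : 0 < β) (hβ1 : β ≤ 1) (h1 : ‖β • v + α • u‖ = 1)
    (h2 : ‖β • v + α • u - u‖ = 1) : α = 0 ∧ β = 1 := by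
  have hu0 : u ≠ 0 := by rintro rfl; simp at hu
  have h2' : ‖β • v + (α - 1) • u‖ = 1 := by 
    have e : β • v + (α - 1) • u = β • v + α • u - u := by module
    rw [e, h2]
  rcases lt_or_ge 0 α with ha | ha
  · exfalso
    have e : ‖β • v + (-1 : ℝ) • u‖ ≤ 1 := by
      have : β • v + (-1 : ℝ) • u = β • (v - u) + (1 - β) • (-u) := by module
      rw [this]
      refine (norm_add_le _ _).trans ?_
      rw [norm_smul, norm_smul, norm_neg, huv, hu, Real.norm_of_nonneg hβ.le,
        Real.norm_of_nonneg (by linarith)]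
      linarith
    have := aux_between (β • v) u hu0 (-1) (α - 1) α (by linarith) (by linarith) e h1.le
    linarith
  · by_cases h : α < 1 - β
    · exfalso
      have e : ‖β • v + (1 - β) • u‖ ≤ 1 := by
        refine (norm_add_le _ _).trans ?_
        rw [norm_smul, norm_smul, hv, hu, Real.norm_of_nonneg hβ.le,
          Real.norm_of_nonneg (by linarith)]
        linarith
      have := aux_between (β • v) u hu0 (α - 1) α (1 - β) (by linarith) h h2'.le e
      linarith
    · constructor <;> linarith

theorem aux_unique2 [StrictConvexSpace ℝ E] (u v : E) (hu : ‖u‖ = 1) (hv : ‖v‖ = 1)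
    (huv : ‖v - u‖ = 1) (α β : ℝ) (hβ : 0 < β) (h1 : ‖β • v + α • u‖ = 1)
    (h2 : ‖β • v + α • u - u‖ = 1) : β • v + α • u = v := by
  rcases le_total β 1 with hb | hb
  · obtain ⟨rfl, rfl⟩ := aux_unique1 u v hu hv huv α β hβ hb h1 h2
    simp
  · have e : β⁻¹ • (β • v + α • u) + (-(α / β)) • u = v := by
      have : β⁻¹ * β = 1 := inv_mul_cancel₀ hβ.ne'
      have h3 : β⁻¹ * α - α / β = 0 := by field_simp; ring
      calc _ = (β⁻¹ * β) • v + (β⁻¹ * α - α / β) • u := by module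
        _ = v := by rw [this, h3]; simp
    obtain ⟨h3, h4⟩ := aux_unique1 u (β • v + α • u) hu h1 h2 (-(α / β)) β⁻¹ (by positivity)
      (inv_le_one_of_one_le₀ hb) (by rw [e, hv]) (by rw [e, huv])
    rw [h3, h4] at e
    simpa using e

theorem aux_det (f g : E →ₗ[ℝ] ℝ) (hfg : ∀ x, f x = 0 → g x = 0 → x = 0) (u v : E)
    (hD : f u * g v - g u * f v = 0) (hu : u ≠ 0) : ∃ c : ℝ, v = c • u := by
  by_cases h : f u = 0
  · have hg : g u ≠ 0 := fun h' => hu (hfg u h h')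
    refine ⟨g v / g u, sub_eq_zero.1 (hfg _ ?_ ?_)⟩
    · have : f v = 0 := by
        rw [h] at hD
        have : g u * f v = 0 := by linarith
        exact (mul_eq_zero.1 this).resolve_left hg
      simp [this, h]
    · simp [hg]
  · refine ⟨f v / f u, sub_eq_zero.1 (hfg _ ?_ ?_)⟩
    · simp [h]
    · simp only [map_sub, map_smul, smul_eq_mul]
      field_simp
      linarith

theorem aux_det_ne (f g : E →ₗ[ℝ] ℝ) (hfg : ∀ x, f x = 0 → g x = 0 → x = 0) (u v : E)
    (hu : ‖u‖ = 1) (hv : ‖v‖ = 1) (huv : ‖v - u‖ = 1) : f u * g v - g u * f v ≠ 0 := by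
  intro hD
  obtain ⟨c, rfl⟩ := aux_det f g hfg u v hD (by rintro rfl; simp at hu)
  have : c • u - u = (c - 1) • u := by module
  rw [this] at huv
  rw [norm_smul, hu, Real.norm_eq_abs, mul_one] at huv hv
  rcases abs_cases c with ⟨h1, _⟩ | ⟨h1, _⟩ <;> rcases abs_cases (c - 1) with ⟨h2, _⟩ | ⟨h2, _⟩ <;>
    linarith

theorem aux_unique [StrictConvexSpace ℝ E] (f g : E →ₗ[ℝ] ℝ)
    (hfg : ∀ x, f x = 0 → g x = 0 → x = 0) (u v w : E) (hu : ‖u‖ = 1) (hv : ‖v‖ = 1)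
    (huv : ‖v - u‖ = 1) (hw : ‖w‖ = 1) (huw : ‖w - u‖ = 1) : w = v ∨ w = u - v := by
  have hD := aux_det_ne f g hfg u v hu hv huv
  have hD' := aux_det_ne f g hfg u w hu hw huw
  obtain ⟨α, β, hβ, rfl⟩ : ∃ α β : ℝ, β ≠ 0 ∧ w = β • v + α • u := by
    refine ⟨(f w * g v - g w * f v) / (f u * g v - g u * f v),
      (f u * g w - g u * f w) / (f u * g v - g u * f v), div_ne_zero hD' hD,
      sub_eq_zero.1 (hfg _ ?_ ?_)⟩ <;>
    · simp only [map_sub, map_add, map_smul, smul_eq_mul]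
      generalize f u = a at *
      generalize f v = b at *
      generalize f w = c at *
      generalize g u = a' at *
      generalize g v = b' at *
      generalize g w = c' at *
      field_simp
      ring
  rcases lt_or_gt_of_ne hβ with h | h
  · right
    have e : u - (β • v + α • u) = (-β) • v + (1 - α) • u := by module
    have := aux_unique2 u v hu hv huv (1 - α) (-β) (by linarith)
      (by rw [← e, norm_sub_rev, huw]) (by rw [← e, ← hw, ← norm_neg]; congr 1; abel)
    rw [← e] at this
    generalize β • v + α • u = w at this
    rw [← this, sub_sub_cancel]
  · left
    exact aux_unique2 u v hu hv huv α β h hw huw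

theorem aux_diag [StrictConvexSpace ℝ E] (f g : E →ₗ[ℝ] ℝ)
    (hfg : ∀ x, f x = 0 → g x = 0 → x = 0) (u v : E) (hu : ‖u‖ = 1) (hv : ‖v‖ = 1)
    (huv : ‖v - u‖ = 1) : 1 ≤ ‖u + v‖ ∧ ‖u + v‖ ≠ 1 := by
  constructor
  · have h := norm_sub_le (u + v) (v - u)
    have e : u + v - (v - u) = (2 : ℝ) • u := by module
    rw [e, norm_smul, hu, huv] at h
    norm_num at h
    linarith
  · intro h
    rcases aux_unique f g hfg u v (-v) hu hv huv (by rwa [norm_neg])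
      (by rw [← h, ← norm_neg]; congr 1; abel) with h1 | h1
    · have : v = 0 := by
        have h2 : (2 : ℝ) • v = 0 := by
          rw [two_smul]; nth_rewrite 1 [← h1]; exact neg_add_cancel v
        simpa using h2
      rw [this] at hv; simp at hv
    · have : u = 0 := by
        have : u = -v + v := by rw [h1]; abel
        rw [this]; abel
      rw [this] at hu; simp at hu

theorem aux_rotate' [StrictConvexSpace ℝ E] [FiniteDimensional ℝ E]
    (hr : 1 < Module.rank ℝ E) (f g : E →ₗ[ℝ] ℝ)
    (hfg : ∀ x, f x = 0 → g x = 0 → x = 0) (u v : E) (hu : ‖u‖ = 1) (hv : ‖v‖ = 1)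
    (huv : ‖v - u‖ = 1) (hD : 0 ≤ f u * g v - g u * f v) :
    ∃ u' v' : E, ‖u'‖ = 1 ∧ ‖v'‖ = 1 ∧ ‖v' - u'‖ = 1 ∧ ‖u' + v' - (u + v)‖ = 1 := by
  have hf : Continuous f := f.continuous_of_finiteDimensional
  have hg : Continuous g := g.continuous_of_finiteDimensional
  have : ProperSpace E := FiniteDimensional.proper_real E
  let T : Set (E × E) := {p | ‖p.1‖ = 1 ∧ ‖p.2‖ = 1 ∧ ‖p.2 - p.1‖ = 1 ∧
    0 ≤ f p.1 * g p.2 - g p.1 * f p.2}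
  have hTc : IsClosed T := by
    have c1 : IsClosed {p : E × E | ‖p.1‖ = 1} := isClosed_eq (by fun_prop) (by fun_prop)
    have c2 : IsClosed {p : E × E | ‖p.2‖ = 1} := isClosed_eq (by fun_prop) (by fun_prop)
    have c3 : IsClosed {p : E × E | ‖p.2 - p.1‖ = 1} := isClosed_eq (by fun_prop) (by fun_prop)
    have c4 : IsClosed {p : E × E | 0 ≤ f p.1 * g p.2 - g p.1 * f p.2} :=
      isClosed_le (by fun_prop) (by fun_prop)
    exact c1.inter (c2.inter (c3.inter c4))
  have hT : IsCompact T := by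
    refine ((isCompact_closedBall (0 : E) 1).prod (isCompact_closedBall (0 : E) 1)).of_isClosed_subset
      hTc ?_
    rintro ⟨p, q⟩ ⟨h1, h2, -⟩
    simp only [Set.mem_prod, mem_closedBall_zero_iff]
    exact ⟨h1.le, h2.le⟩
  let A : Set E := Set.image Prod.fst (T ∩ {p | ‖p.1 + p.2 - (u + v)‖ ≤ 1})
  let B : Set E := Set.image Prod.fst (T ∩ {p | 1 ≤ ‖p.1 + p.2 - (u + v)‖})
  have hA : IsClosed A := ((hT.inter_right
    (isClosed_le (by fun_prop) (by fun_prop))).image continuous_fst).isClosed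
  have hB : IsClosed B := ((hT.inter_right
    (isClosed_le (by fun_prop) (by fun_prop))).image continuous_fst).isClosed
  have hc := (isConnected_sphere hr (0 : E) zero_le_one).isPreconnected
  rw [isPreconnected_closed_iff] at hc
  have hd := (aux_diag f g hfg u v hu hv huv).1
  have hex : (Metric.sphere (0 : E) 1 ∩ (A ∩ B)).Nonempty := by
    refine hc A B hA hB ?_ ?_ ?_
    · intro p hp
      rw [mem_sphere_zero_iff_norm] at hp
      obtain ⟨q, hq⟩ : ∃ q, (p, q) ∈ T := by
        obtain ⟨z, hz1, hz2⟩ := aux_isosceles hr 0 p 1 one_pos (by simp [hp])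
        rw [zero_sub, norm_neg] at hz1
        rcases le_total 0 (f p * g z - g p * f z) with h | h
        · exact ⟨z, hp, hz1, by rwa [norm_sub_rev], h⟩
        · refine ⟨p - z, hp, hz2, ?_, ?_⟩
          · rw [sub_sub_cancel_left, norm_neg, hz1]
          · simp only [map_sub]; linarith
      rcases le_total ‖p + q - (u + v)‖ 1 with h | h
      · exact Or.inl ⟨(p, q), ⟨hq, h⟩, rfl⟩
      · exact Or.inr ⟨(p, q), ⟨hq, h⟩, rfl⟩
    · refine ⟨u, by simpa using hu, (u, v), ⟨⟨hu, hv, huv, hD⟩, ?_⟩, rfl⟩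
      simp
    · refine ⟨-u, by simpa using hu, (-u, -v), ⟨⟨by simpa using hu, by simpa using hv, ?_, ?_⟩, ?_⟩, rfl⟩
      · rw [← huv, ← norm_neg]; congr 1; simp only; abel
      · simpa using hD
      · have : -u + -v - (u + v) = (-2 : ℝ) • (u + v) := by module
        simp only [Set.mem_ofPred_eq]
        rw [this, norm_smul]
        norm_num
        linarith
  obtain ⟨p, -, ⟨⟨p1, q⟩, ⟨hq, hq2⟩, rfl⟩, ⟨⟨p2, q'⟩, ⟨hq', hq2'⟩, h12⟩⟩ := hex
  · simp only at h12
    subst h12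
    obtain ⟨a1, a2, a3, a4⟩ := hq
    obtain ⟨b1, b2, b3, b4⟩ := hq'
    simp only at a1 a2 a3 a4 b1 b2 b3 b4
    simp only [Set.mem_ofPred_eq] at hq2 hq2'
    have hqq : q' = q := by
      rcases aux_unique f g hfg p2 q q' a1 a2 a3 b2 b3 with h | h
      · exact h
      · exfalso
        apply aux_det_ne f g hfg p2 q a1 a2 a3
        rw [h] at b4
        simp only [map_sub] at b4
        linarith
    subst hqq
    exact ⟨p2, q', a1, a2, a3, le_antisymm hq2 hq2'⟩

theorem aux_rotate [StrictConvexSpace ℝ E] [FiniteDimensional ℝ E]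
    (hr : 1 < Module.rank ℝ E) (f g : E →ₗ[ℝ] ℝ)
    (hfg : ∀ x, f x = 0 → g x = 0 → x = 0) (u v : E) (hu : ‖u‖ = 1) (hv : ‖v‖ = 1)
    (huv : ‖v - u‖ = 1) :
    ∃ u' v' : E, ‖u'‖ = 1 ∧ ‖v'‖ = 1 ∧ ‖v' - u'‖ = 1 ∧ ‖u' + v' - (u + v)‖ = 1 := by
  rcases le_total 0 (f u * g v - g u * f v) with h | h
  · exact aux_rotate' hr f g hfg u v hu hv huv h
  · rw [add_comm u v]
    exact aux_rotate' hr f g hfg v u hv hu (by rwa [norm_sub_rev]) (by linarith)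

theorem aux_rhombus0 [StrictConvexSpace ℝ E] (f g : E →ₗ[ℝ] ℝ)
    (hfg : ∀ x, f x = 0 → g x = 0 → x = 0) (φ : E → E)
    (hφ : ∀ x y, ‖x - y‖ = 1 → ‖φ x - φ y‖ = 1) (c u v : E) (hu : ‖u‖ = 1) (hv : ‖v‖ = 1)
    (huv : ‖v - u‖ = 1) :
    ‖φ (c + u) - φ c‖ = 1 ∧ ‖φ (c + v) - φ c‖ = 1 ∧ ‖φ (c + v) - φ c - (φ (c + u) - φ c)‖ = 1 ∧
    (φ (c + u + v) = φ c ∨ φ (c + u + v) = φ (c + u) + φ (c + v) - φ c) := by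
  have h1 : ‖φ (c + u) - φ c‖ = 1 := hφ _ _ (by simpa using hu)
  have h2 : ‖φ (c + v) - φ c‖ = 1 := hφ _ _ (by simpa using hv)
  have h3 : ‖φ (c + v) - φ (c + u)‖ = 1 := hφ _ _ (by simpa using huv)
  have h4 : ‖φ (c + u + v) - φ (c + u)‖ = 1 := hφ _ _ (by simpa using hv)
  have h5 : ‖φ (c + u + v) - φ (c + v)‖ = 1 := hφ _ _ (by
    rw [← hu]; congr 1; abel)
  refine ⟨h1, h2, by rwa [sub_sub_sub_cancel_right], ?_⟩
  rcases aux_unique f g hfg (φ (c + v) - φ (c + u)) (φ c - φ (c + u)) (φ (c + u + v) - φ (c + u))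
    h3 (by rwa [norm_sub_rev]) (by rwa [sub_sub_sub_cancel_right, norm_sub_rev]) h4
    (by rwa [sub_sub_sub_cancel_right]) with h | h
  · left; exact sub_left_injective h
  · right
    rw [sub_eq_iff_eq_add.1 h]; abel

theorem aux_rhombus [StrictConvexSpace ℝ E] [FiniteDimensional ℝ E]
    (hr : 1 < Module.rank ℝ E) (f g : E →ₗ[ℝ] ℝ)
    (hfg : ∀ x, f x = 0 → g x = 0 → x = 0) (φ : E → E)
    (hφ : ∀ x y, ‖x - y‖ = 1 → ‖φ x - φ y‖ = 1) (c u v : E) (hu : ‖u‖ = 1) (hv : ‖v‖ = 1)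
    (huv : ‖v - u‖ = 1) : φ (c + u + v) = φ (c + u) + φ (c + v) - φ c := by
  obtain ⟨-, -, -, h | h⟩ := aux_rhombus0 f g hfg φ hφ c u v hu hv huv
  · exfalso
    obtain ⟨u', v', hu', hv', huv', hw⟩ := aux_rotate hr f g hfg u v hu hv huv
    obtain ⟨h1, h2, h3, h4⟩ := aux_rhombus0 f g hfg φ hφ c u' v' hu' hv' huv'
    have h5 : ‖φ (c + u' + v') - φ c‖ = 1 := by
      rw [← h]; apply hφ; rw [← hw]; congr 1; abel
    rcases h4 with h4 | h4
    · rw [h4] at h5; simp at h5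
    · apply (aux_diag f g hfg _ _ h1 h2 h3).2
      rw [← h5, h4]; congr 1; abel
  · exact h

theorem aux_step [StrictConvexSpace ℝ E] [FiniteDimensional ℝ E]
    (hr : 1 < Module.rank ℝ E) (f g : E →ₗ[ℝ] ℝ)
    (hfg : ∀ x, f x = 0 → g x = 0 → x = 0) (φ : E → E)
    (hφ : ∀ x y, ‖x - y‖ = 1 → ‖φ x - φ y‖ = 1) (c u : E) (hu : ‖u‖ = 1) :
    φ (c + u + u) - φ (c + u) = φ (c + u) - φ c := by
  obtain ⟨v, hv, huv⟩ := aux_isosceles hr 0 u 1 one_pos (by simp [hu])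
  rw [zero_sub, norm_neg] at hv
  have e1 := aux_rhombus hr f g hfg φ hφ c u v hu hv (by rwa [norm_sub_rev])
  have e2 := aux_rhombus hr f g hfg φ hφ (c + v) u (u - v) hu huv
    (by rwa [sub_sub_cancel_left, norm_neg])
  have a1 : c + v + u + (u - v) = c + u + u := by abel
  have a2 : c + v + u = c + u + v := by abel
  have a3 : c + v + (u - v) = c + u := by abel
  rw [a1, a2, a3, e1] at e2
  rw [e2]; abel

theorem aux_line [StrictConvexSpace ℝ E] [FiniteDimensional ℝ E]
    (hr : 1 < Module.rank ℝ E) (f g : E →ₗ[ℝ] ℝ)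
    (hfg : ∀ x, f x = 0 → g x = 0 → x = 0) (φ : E → E)
    (hφ : ∀ x y, ‖x - y‖ = 1 → ‖φ x - φ y‖ = 1) (c u : E) (hu : ‖u‖ = 1) (n : ℕ) :
    φ (c + (n : ℝ) • u) = φ c + (n : ℝ) • (φ (c + u) - φ c) := by
  have key : ∀ n : ℕ, φ (c + (n : ℝ) • u + u) - φ (c + (n : ℝ) • u) = φ (c + u) - φ c := by
    intro n
    induction n with
    | zero => simp
    | succ n ih =>
      have : c + ((n + 1 : ℕ) : ℝ) • u = c + (n : ℝ) • u + u := by push_cast; module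
      rw [this, ← ih, aux_step hr f g hfg φ hφ _ u hu]
  induction n with
  | zero => simp
  | succ n ih =>
    have : c + ((n + 1 : ℕ) : ℝ) • u = c + (n : ℝ) • u + u := by push_cast; module
    rw [this, ← sub_add_cancel (φ (c + (n : ℝ) • u + u)) (φ (c + (n : ℝ) • u)), key n, ih]
    push_cast; module

theorem aux_main [StrictConvexSpace ℝ E] [FiniteDimensional ℝ E]
    (hr : 1 < Module.rank ℝ E) (f g : E →ₗ[ℝ] ℝ)
    (hfg : ∀ x, f x = 0 → g x = 0 → x = 0) (φ : E → E)
    (hφ : ∀ x y, ‖x - y‖ = 1 → ‖φ x - φ y‖ = 1) (x y : E) : ‖φ x - φ y‖ = ‖x - y‖ := by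
  have hline := aux_line hr f g hfg φ hφ
  have hnat : ∀ (n : ℕ) (x y : E), 0 < n → ‖x - y‖ = n → ‖φ x - φ y‖ = n := by
    intro n x y hn h
    have hn' : (0 : ℝ) < n := by exact_mod_cast hn
    have hu : ‖(n : ℝ)⁻¹ • (x - y)‖ = 1 := by
      rw [norm_smul, h, norm_inv, Real.norm_of_nonneg hn'.le, inv_mul_cancel₀ hn'.ne']
    have := hline y _ hu n
    rw [smul_inv_smul₀ hn'.ne', add_sub_cancel] at this
    rw [this, add_sub_cancel_left, norm_smul, hφ _ _ (by simpa using hu)]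
    simp
  have hrat : ∀ (q : ℚ) (x y : E), 0 < q → q ≤ 2 → ‖x - y‖ = q → ‖φ x - φ y‖ = q := by
    intro q x y hq hq2 h
    have hq2' : (q : ℝ) ≤ 2 := by exact_mod_cast hq2
    obtain ⟨z, hz1, hz2⟩ := aux_isosceles hr x y 1 one_pos (by rw [h]; linarith)
    have l1 := hline z _ hz1 q.den
    have l2 := hline z _ hz2 q.den
    have hden : (0 : ℝ) < q.den := by exact_mod_cast q.den_pos
    have hnum : (q.den : ℝ) * q = (q.num.toNat : ℕ) := by
      have h1 : ((q.num.toNat : ℕ) : ℤ) = q.num := Int.toNat_of_nonneg (Rat.num_pos.2 hq).le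
      have h2 : (q.den : ℚ) * q = q.num := Rat.den_mul_eq_num q
      have h3 : (q.den : ℝ) * q = (q.num : ℝ) := by exact_mod_cast congrArg (Rat.cast (K := ℝ)) h2
      rw [h3]; exact_mod_cast congrArg (Int.cast (R := ℝ)) h1.symm
    have h5 := hnat q.num.toNat (z + (q.den : ℝ) • (x - z)) (z + (q.den : ℝ) • (y - z))
      (by have := Rat.num_pos.2 hq; omega) (by
        have : z + (q.den : ℝ) • (x - z) - (z + (q.den : ℝ) • (y - z)) = (q.den : ℝ) • (x - y) := by
          module
        rw [this, norm_smul, Real.norm_of_nonneg hden.le, h, hnum])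
    rw [l1, l2, add_sub_cancel, add_sub_cancel] at h5
    have : φ z + (q.den : ℝ) • (φ x - φ z) - (φ z + (q.den : ℝ) • (φ y - φ z))
        = (q.den : ℝ) • (φ x - φ y) := by module
    rw [this, norm_smul, Real.norm_of_nonneg hden.le, ← hnum] at h5
    exact mul_left_cancel₀ hden.ne' h5
  have hloc : ∀ (x y : E), ‖x - y‖ ≤ 1 → ‖φ x - φ y‖ ≤ ‖x - y‖ := by
    intro x y h
    by_contra! hlt
    obtain ⟨q, hq1, hq2⟩ := exists_rat_btwn (x := ‖x - y‖ / 2) (y := min (‖φ x - φ y‖ / 2) 2)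
      (lt_min (by linarith) (by linarith))
    have hq0 : (0 : ℝ) < q := lt_of_le_of_lt (by positivity) hq1
    have hq3 := (lt_min_iff.1 hq2).1
    have hq4 := (lt_min_iff.1 hq2).2
    obtain ⟨z, hz1, hz2⟩ := aux_isosceles hr x y q hq0 (by linarith)
    have a1 := hrat q x z (by exact_mod_cast hq0) (by exact_mod_cast hq4.le) hz1
    have a2 := hrat q y z (by exact_mod_cast hq0) (by exact_mod_cast hq4.le) hz2
    have := norm_sub_le_norm_sub_add_norm_sub (φ x) (φ z) (φ y)
    rw [norm_sub_rev (φ z)] at this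
    linarith
  have hpow : ∀ (n : ℕ) (x y : E), ‖x - y‖ ≤ 2 ^ n → ‖φ x - φ y‖ ≤ ‖x - y‖ := by
    intro n
    induction n with
    | zero => intro x y h; exact hloc x y (by simpa using h)
    | succ n ih =>
      intro x y h
      have e1 : x - (1 / 2 : ℝ) • (x + y) = (1 / 2 : ℝ) • (x - y) := by module
      have e2 : (1 / 2 : ℝ) • (x + y) - y = (1 / 2 : ℝ) • (x - y) := by module
      have e3 : ‖(1 / 2 : ℝ) • (x - y)‖ = ‖x - y‖ / 2 := by
        rw [norm_smul]; norm_num; ring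
      rw [pow_succ] at h
      have a1 := ih x ((1 / 2 : ℝ) • (x + y)) (by rw [e1, e3]; linarith)
      have a2 := ih ((1 / 2 : ℝ) • (x + y)) y (by rw [e2, e3]; linarith)
      rw [e1, e3] at a1
      rw [e2, e3] at a2
      have := norm_sub_le_norm_sub_add_norm_sub (φ x) (φ ((1 / 2 : ℝ) • (x + y))) (φ y)
      linarith
  have hle : ∀ (x y : E), ‖φ x - φ y‖ ≤ ‖x - y‖ := by
    intro x y
    obtain ⟨n, hn⟩ := pow_unbounded_of_one_lt ‖x - y‖ one_lt_two
    exact hpow n x y hn.le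
  refine le_antisymm (hle x y) ?_
  rcases eq_or_ne x y with rfl | hne
  · simp
  have hd : 0 < ‖x - y‖ := norm_pos_iff.2 (sub_ne_zero.2 hne)
  obtain ⟨n, hn⟩ := exists_nat_ge ‖x - y‖
  have hn0 : 0 < n := by
    have : (0 : ℝ) < n := by linarith
    exact_mod_cast this
  have b1 : ‖x - (x - (n / ‖x - y‖) • (x - y))‖ = n := by
    rw [sub_sub_cancel, norm_smul, Real.norm_of_nonneg (by positivity), div_mul_cancel₀ _ hd.ne']
  have b2 : ‖y - (x - (n / ‖x - y‖) • (x - y))‖ = n - ‖x - y‖ := by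
    have : y - (x - (n / ‖x - y‖) • (x - y)) = (n / ‖x - y‖ - 1) • (x - y) := by module
    rw [this, norm_smul, Real.norm_of_nonneg, sub_mul, div_mul_cancel₀ _ hd.ne', one_mul]
    rw [sub_nonneg, le_div_iff₀ hd]; linarith
  have c1 := hnat n _ _ hn0 b1
  have c2 := hle y (x - (n / ‖x - y‖) • (x - y))
  have := norm_sub_le_norm_sub_add_norm_sub (φ x) (φ y) (φ (x - (n / ‖x - y‖) • (x - y)))
  linarith

theorem aux_final [StrictConvexSpace ℝ E] [FiniteDimensional ℝ E]
    (hr : 1 < Module.rank ℝ E) (f g : E →ₗ[ℝ] ℝ)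
    (hfg : ∀ x, f x = 0 → g x = 0 → x = 0) (φ : E → E)
    (hφ : ∀ x y, ‖x - y‖ = 1 → ‖φ x - φ y‖ = 1) :
    (∀ x y, ‖φ x - φ y‖ = ‖x - y‖) ∧ ∃ (L : E →ₗ[ℝ] E) (t : E), ∀ x, φ x = L x + t := by
  have h := aux_main hr f g hfg φ hφ
  refine ⟨h, ?_⟩
  have hi : Isometry φ := Isometry.of_dist_eq fun x y => by rw [dist_eq_norm, dist_eq_norm, h]
  let A := hi.affineIsometryOfStrictConvexSpace
  refine ⟨A.toAffineMap.linear, φ 0, fun x => ?_⟩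
  have := A.toAffineMap.map_vadd 0 x
  simpa [A] using this

end Aux

theorem aux_gen {V : Type*} [AddCommGroup V] [Module ℝ V] [FiniteDimensional ℝ V]
    (N : V → ℝ) (hadd : ∀ x y, N (x + y) ≤ N x + N y)
    (hsmul : ∀ (c : ℝ) (x : V), N (c • x) = |c| * N x) (hz : ∀ x, N x = 0 → x = 0)
    (hSC : ∀ x y : V, N x = 1 → N y = 1 → x ≠ y → N ((1 / 2 : ℝ) • (x + y)) < 1)
    (hr : 1 < Module.rank ℝ V) (f g : V →ₗ[ℝ] ℝ)
    (hfg : ∀ x, f x = 0 → g x = 0 → x = 0) (φ : V → V)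
    (hφ : ∀ x y, N (x - y) = 1 → N (φ x - φ y) = 1) :
    (∀ x y, N (φ x - φ y) = N (x - y)) ∧ ∃ (L : V →ₗ[ℝ] V) (t : V), ∀ x, φ x = L x + t := by
  have h0 : N 0 = 0 := by simpa using hsmul 0 0
  have hneg : ∀ x, N (-x) = N x := fun x => by simpa using hsmul (-1) x
  have hnn : ∀ x, 0 ≤ N x := fun x => by
    have := hadd x (-x)
    rw [add_neg_cancel, h0, hneg] at this
    linarith
  letI : Norm V := ⟨N⟩
  have core : NormedSpace.Core ℝ V :=
    { norm_nonneg := hnn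
      norm_smul := fun c x => hsmul c x
      norm_triangle := hadd
      norm_eq_zero_iff := fun x => ⟨hz x, fun h => by rw [h]; exact h0⟩ }
  letI i1 : NormedAddCommGroup V := NormedAddCommGroup.ofCore core
  letI i2 : NormedSpace ℝ V := NormedSpace.ofCore core
  haveI : StrictConvexSpace ℝ V := by
    refine StrictConvexSpace.of_norm_add_ne_two fun x y hx hy hxy h => ?_
    have h1 := hSC x y hx hy hxy
    rw [hsmul] at h1
    have h2 : N (x + y) = 2 := h
    rw [h2] at h1
    norm_num at h1
  exact aux_final hr f g hfg φ hφ

/-- If `N` is a strictly convex norm on `ℝ²`, then every unit-distance preserving map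
is an affine isometry. -/
theorem aleksandrov_strictly_convex (N : ℝ × ℝ → ℝ) (hN : IsNorm N)
    (hSC : ∀ x y : ℝ × ℝ, N x = 1 → N y = 1 → x ≠ y → N ((1 / 2 : ℝ) • (x + y)) < 1)
    (φ : ℝ × ℝ → ℝ × ℝ)
    (hφ : ∀ x y : ℝ × ℝ, N (x - y) = 1 → N (φ x - φ y) = 1) :
    (∀ x y : ℝ × ℝ, N (φ x - φ y) = N (x - y)) ∧
      ∃ (L : (ℝ × ℝ) →ₗ[ℝ] (ℝ × ℝ)) (t : ℝ × ℝ), ∀ x : ℝ × ℝ, φ x = L x + t := by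
  have hr : 1 < Module.rank ℝ (ℝ × ℝ) := by
    rw [← Module.finrank_eq_rank]
    simp
  exact aux_gen N hN.add_le hN.smul_eq hN.eq_zero_of hSC hr (LinearMap.fst ℝ ℝ ℝ)
    (LinearMap.snd ℝ ℝ ℝ) (fun x h1 h2 => Prod.ext h1 h2) φ hφ
end

section
/- Let ‖·‖ be a URTC-norm on ℝ², let d > 0, and let φ : ℝ² → ℝ² be a map that preserves distance d. Then for every positive integer n, φ preserves distance d/n, i.e., ‖x − y‖ = d/n implies ‖φ(x) − φ(y)‖ = d/n. -/
namespace URTCAux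

variable {N : ℝ × ℝ → ℝ}

theorem n_zero (hN : IsNorm N) : N 0 = 0 := by
  have := hN.smul_eq 0 0
  simpa using this

theorem n_neg (hN : IsNorm N) (x : ℝ × ℝ) : N (-x) = N x := by
  have := hN.smul_eq (-1) x
  simpa using this

theorem n_comm (hN : IsNorm N) (x y : ℝ × ℝ) : N (x - y) = N (y - x) := by
  rw [← n_neg hN, neg_sub]

theorem n_nonneg (hN : IsNorm N) (x : ℝ × ℝ) : 0 ≤ N x := by
  have h := hN.add_le x (-x)
  rw [n_neg hN, add_neg_cancel, n_zero hN] at h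
  linarith

theorem n_pos (hN : IsNorm N) {x : ℝ × ℝ} (hx : x ≠ 0) : 0 < N x :=
  lt_of_le_of_ne (n_nonneg hN x) fun h => hx (hN.eq_zero_of x h.symm)

theorem n_cont (hN : IsNorm N) : Continuous N := by
  have hb : ∀ x : ℝ × ℝ, N x ≤ |x.1| * N (1, 0) + |x.2| * N (0, 1) := by
    intro x
    have h := hN.add_le (x.1 • ((1 : ℝ), (0 : ℝ))) (x.2 • ((0 : ℝ), (1 : ℝ)))
    rw [hN.smul_eq, hN.smul_eq] at h
    have e : x.1 • ((1 : ℝ), (0 : ℝ)) + x.2 • ((0 : ℝ), (1 : ℝ)) = x := by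
      ext <;> simp
    rwa [e] at h
  rw [continuous_iff_continuousAt]
  intro x
  have ht : Filter.Tendsto (fun y : ℝ × ℝ => |(y - x).1| * N (1, 0) + |(y - x).2| * N (0, 1))
      (nhds x) (nhds 0) := by
    have : Continuous (fun y : ℝ × ℝ => |(y - x).1| * N (1, 0) + |(y - x).2| * N (0, 1)) := by
      fun_prop
    have h := this.tendsto x
    simpa using h
  rw [ContinuousAt, tendsto_iff_dist_tendsto_zero]
  refine squeeze_zero (fun _ => dist_nonneg) (fun y => ?_) ht
  rw [Real.dist_eq]
  refine le_trans ?_ (hb (y - x))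
  rw [abs_le]
  have h1 := hN.add_le (y - x) x
  have h2 := hN.add_le (x - y) y
  rw [sub_add_cancel] at h1 h2
  rw [n_comm hN x y] at h2
  constructor <;> linarith

theorem sphere_bounded (hN : IsNorm N) : Bornology.IsBounded {x | N x = 1} := by
  obtain ⟨z, hz, hmin⟩ := (isCompact_sphere (0 : ℝ × ℝ) 1).exists_isMinOn
    (NormedSpace.sphere_nonempty.2 zero_le_one) (n_cont hN).continuousOn
  have hz0 : z ≠ 0 := by
    rintro rfl
    simp at hz
  have hp := n_pos hN hz0
  rw [isBounded_iff_forall_norm_le]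
  refine ⟨(N z)⁻¹, fun x hx => ?_⟩
  have hx1 : N x = 1 := hx
  have hx0 : x ≠ 0 := by
    rintro rfl
    rw [n_zero hN] at hx1
    norm_num at hx1
  have hxn : 0 < ‖x‖ := norm_pos_iff.2 hx0
  have hm : N z ≤ N (‖x‖⁻¹ • x) := by
    apply hmin
    simp [norm_smul, hxn.ne']
  rw [hN.smul_eq, hx1, mul_one, abs_of_pos (inv_pos.2 hxn)] at hm
  rw [le_inv_comm₀ hxn hp]
  exact hm

theorem n_unit (hN : IsNorm N) {x : ℝ × ℝ} (hx : x ≠ 0) : N ((N x)⁻¹ • x) = 1 := by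
  have hp := n_pos hN hx
  rw [hN.smul_eq, abs_of_pos (inv_pos.2 hp), inv_mul_cancel₀ hp.ne']

theorem ne_zero_of_unit (hN : IsNorm N) {x : ℝ × ℝ} (hx : N x = 1) : x ≠ 0 := by
  rintro rfl
  rw [n_zero hN] at hx
  norm_num at hx

theorem sphere_conn (hN : IsNorm N) : IsPreconnected {x | N x = 1} := by
  have hr : 1 < Module.rank ℝ (ℝ × ℝ) := by
    rw [← Module.finrank_eq_rank]
    simp
  have hc : IsPreconnected ({0}ᶜ : Set (ℝ × ℝ)) :=
    (isConnected_compl_singleton_of_one_lt_rank hr 0).isPreconnected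
  have him := hc.image (fun x => (N x)⁻¹ • x) (by
    refine ContinuousOn.smul (ContinuousOn.inv₀ (n_cont hN).continuousOn ?_) continuousOn_id
    intro x hx
    exact (n_pos hN hx).ne')
  convert him using 1
  ext x
  constructor
  · intro hx
    have hx1 : N x = 1 := hx
    exact ⟨x, ne_zero_of_unit hN hx1, by simp [hx1]⟩
  · rintro ⟨y, hy, rfl⟩
    exact n_unit hN hy

/-- existence of a unit vector at distance one from `w`. -/
theorem exists_apex (hN : IsNorm N) {w : ℝ × ℝ} (hw0 : w ≠ 0) (hw : N w ≤ 1) :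
    ∃ c, N c = 1 ∧ N (c - w) = 1 := by
  have hp := n_pos hN hw0
  have h1 := n_unit hN hw0
  have hcont : ContinuousOn (fun c => N (c - w)) {x | N x = 1} :=
    ((n_cont hN).comp (continuous_id.sub continuous_const)).continuousOn
  have hiv := (sphere_conn hN).intermediate_value (a := (N w)⁻¹ • w) (b := -((N w)⁻¹ • w))
    h1 (by rw [Set.mem_ofPred_eq, n_neg hN]; exact h1) hcont
  have hmem : (1 : ℝ) ∈ Set.Icc (N ((N w)⁻¹ • w - w)) (N (-((N w)⁻¹ • w) - w)) := by
    have hi : 1 ≤ (N w)⁻¹ := (one_le_inv₀ hp).2 hw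
    have hm : (N w)⁻¹ * N w = 1 := inv_mul_cancel₀ hp.ne'
    constructor
    · have e : (N w)⁻¹ • w - w = ((N w)⁻¹ - 1) • w := by rw [sub_smul, one_smul]
      rw [e, hN.smul_eq, abs_of_nonneg (by linarith), sub_mul, hm]
      linarith
    · have e : -((N w)⁻¹ • w) - w = -(((N w)⁻¹ + 1) • w) := by
        rw [add_smul, one_smul]; abel
      rw [e, n_neg hN, hN.smul_eq, abs_of_nonneg (by linarith), add_mul, hm]
      linarith
  obtain ⟨c, hc, hc'⟩ := hiv hmem
  exact ⟨c, hc, hc'⟩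

theorem two_apex (hN : IsNorm N) (hU : IsURTC N) {a b x y : ℝ × ℝ} (hab : N (a - b) = 1)
    (hax : N (a - x) = 1) (hbx : N (b - x) = 1) (hay : N (a - y) = 1) (hby : N (b - y) = 1) :
    y = x ∨ y = a + b - x := by
  obtain ⟨p, q, hpq, hs⟩ := Set.encard_eq_two.1 (hU a b hab)
  have hx : x ∈ ({p, q} : Set (ℝ × ℝ)) := hs ▸ ⟨hax, hbx⟩
  have hy : y ∈ ({p, q} : Set (ℝ × ℝ)) := hs ▸ ⟨hay, hby⟩
  have hz : a + b - x ∈ ({p, q} : Set (ℝ × ℝ)) := by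
    rw [← hs]
    constructor
    · rw [show a - (a + b - x) = -(b - x) by abel, n_neg hN]; exact hbx
    · rw [show b - (a + b - x) = -(a - x) by abel, n_neg hN]; exact hax
  have hne : a + b - x ≠ x := by
    intro h
    have e : a - b = (2 : ℝ) • (a - x) := by
      have : b = x + x - a := by
        have h' := sub_eq_iff_eq_add.1 h
        rw [← h']; abel
      rw [this, two_smul]; abel
    rw [e, hN.smul_eq, hax] at hab
    norm_num at hab
  simp only [Set.mem_insert_iff, Set.mem_singleton_iff] at hx hy hz
  generalize a + b - x = z at hz hne ⊢
  rcases hx with rfl | rfl <;> rcases hy with rfl | rfl <;> rcases hz with rfl | rfl <;>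
    first
    | exact Or.inl rfl
    | exact Or.inr rfl
    | exact absurd rfl hne

theorem sum_ne_one (hN : IsNorm N) (hU : IsURTC N) {u v : ℝ × ℝ} (hu : N u = 1) (hv : N v = 1)
    (huv : N (u - v) = 1) : N (u + v) ≠ 1 := by
  intro h
  have hu0 := ne_zero_of_unit hN hu
  have hv0 := ne_zero_of_unit hN hv
  rcases two_apex hN hU (a := 0) (b := v) (x := u) (y := -u)
    (by rw [zero_sub, n_neg hN, hv]) (by rw [zero_sub, n_neg hN, hu])
    (by rw [n_comm hN, huv]) (by rw [zero_sub, neg_neg, hu])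
    (by rw [sub_neg_eq_add, add_comm, h]) with h' | h'
  · exact hu0 (by
      have : (2 : ℝ) • u = 0 := by rw [two_smul]; nth_rewrite 1 [← h']; abel
      simpa using this)
  · apply hv0
    have : v = (0 + v - u) + u := by abel
    rw [this, ← h']; abel

theorem sum_ge_one (hN : IsNorm N) {u v : ℝ × ℝ} (hu : N u = 1)
    (huv : N (u - v) = 1) : 1 ≤ N (u + v) := by
  have h := hN.add_le (u + v) (u - v)
  rw [show u + v + (u - v) = (2 : ℝ) • u by rw [two_smul]; abel, hN.smul_eq, hu, huv] at h
  norm_num at h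
  linarith

/-- positively oriented unit equilateral pairs -/
def Tri (N : ℝ × ℝ → ℝ) : Set ((ℝ × ℝ) × (ℝ × ℝ)) :=
  {p | N p.1 = 1 ∧ N p.2 = 1 ∧ N (p.1 - p.2) = 1 ∧ 0 ≤ p.1.1 * p.2.2 - p.1.2 * p.2.1}

theorem det_ne (hN : IsNorm N) {u v : ℝ × ℝ} (hu : N u = 1) (hv : N v = 1)
    (huv : N (u - v) = 1) : u.1 * v.2 - u.2 * v.1 ≠ 0 := by
  intro h
  have hu0 := ne_zero_of_unit hN hu
  have : ∃ c : ℝ, v = c • u := by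
    by_cases h1 : u.1 = 0
    · have h2 : u.2 ≠ 0 := fun h2 => hu0 (Prod.ext h1 h2)
      refine ⟨v.2 / u.2, ?_⟩
      have hv1 : v.1 = 0 := by
        rw [h1] at h
        have : u.2 * v.1 = 0 := by linarith
        exact (mul_eq_zero.1 this).resolve_left h2
      ext
      · simp [h1, hv1]
      · simp [h2]
    · refine ⟨v.1 / u.1, ?_⟩
      ext
      · simp [h1]
      · simp only [Prod.smul_snd, smul_eq_mul]
        field_simp
        linarith
  obtain ⟨c, rfl⟩ := this
  rw [hN.smul_eq, hu, mul_one] at hv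
  rw [show u - c • u = (1 - c) • u by rw [sub_smul, one_smul], hN.smul_eq, hu, mul_one] at huv
  rcases eq_or_eq_neg_of_abs_eq hv with rfl | rfl
  · norm_num at huv
  · norm_num at huv

theorem tri_compact (hN : IsNorm N) : IsCompact (Tri N) := by
  have hc := n_cont hN
  refine Metric.isCompact_of_isClosed_isBounded ?_ ?_
  · refine IsClosed.inter ?_ (IsClosed.inter ?_ (IsClosed.inter ?_ ?_))
    · exact isClosed_eq (hc.comp continuous_fst) continuous_const
    · exact isClosed_eq (hc.comp continuous_snd) continuous_const
    · exact isClosed_eq (hc.comp (continuous_fst.sub continuous_snd)) continuous_const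
    · exact isClosed_le (f := fun _ : (ℝ × ℝ) × (ℝ × ℝ) => (0 : ℝ))
        (g := fun p => p.1.1 * p.2.2 - p.1.2 * p.2.1) continuous_const (by fun_prop)
  · exact ((sphere_bounded hN).prod (sphere_bounded hN)).subset fun p hp => ⟨hp.1, hp.2.1⟩

theorem tri_conn (hN : IsNorm N) (hU : IsURTC N) : PreconnectedSpace (Tri N) := by
  have : CompactSpace (Tri N) := isCompact_iff_compactSpace.1 (tri_compact hN)
  let f : Tri N → ℝ × ℝ := fun p => p.1.1
  have hf : Continuous f := by fun_prop
  have hinj : Function.Injective f := by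
    rintro ⟨⟨u, v⟩, hu, hv, huv, hd⟩ ⟨⟨u', w⟩, hu', hw, huw, hd'⟩ h
    have e : u = u' := h
    subst e
    simp only at hu hv huv hd hw huw hd'
    rcases two_apex hN hU (a := 0) (b := u) (x := v) (y := w)
      (by rw [zero_sub, n_neg hN, hu]) (by rw [zero_sub, n_neg hN, hv]) huv
      (by rw [zero_sub, n_neg hN, hw]) huw with h' | h'
    · subst h'; rfl
    · exfalso
      subst h'
      apply det_ne hN hu hv huv
      simp at hd'
      linarith
  have hpre := (sphere_conn hN).preimage_of_isClosedMap hinj hf.isClosedMap (by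
    intro u hu
    have hu1 : N u = 1 := hu
    obtain ⟨v, hv, hvu⟩ := exists_apex hN (ne_zero_of_unit hN hu1) hu1.le
    have huv : N (u - v) = 1 := by rw [n_comm hN, hvu]
    rcases le_total 0 (u.1 * v.2 - u.2 * v.1) with h | h
    · exact ⟨⟨(u, v), hu1, hv, huv, h⟩, rfl⟩
    · refine ⟨⟨(u, u - v), hu1, huv, ?_, ?_⟩, rfl⟩
      · simpa using hv
      · simp
        linarith)
  have huniv : f ⁻¹' {x | N x = 1} = Set.univ := by
    ext p
    simpa using p.2.1
  rw [huniv] at hpre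
  exact ⟨hpre⟩

theorem exists_rot (hN : IsNorm N) (hU : IsURTC N) {u v : ℝ × ℝ} (hu : N u = 1) (hv : N v = 1)
    (huv : N (u - v) = 1) :
    ∃ u' v', N u' = 1 ∧ N v' = 1 ∧ N (u' - v') = 1 ∧ N (u' + v' - (u + v)) = 1 := by
  wlog hd : 0 ≤ u.1 * v.2 - u.2 * v.1 generalizing u v
  · have h := this hv hu (by rw [n_comm hN, huv]) (by linarith)
    rwa [add_comm v u] at h
  have := tri_conn hN hU
  have hc := n_cont hN
  let F : Tri N → ℝ := fun p => N (p.1.1 + p.1.2 - (u + v))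
  have hF : Continuous F := hc.comp (by fun_prop)
  have hr := mem_range_of_exists_le_of_exists_ge (c := (1 : ℝ)) hF
    ⟨⟨(u, v), hu, hv, huv, hd⟩, by
      change N (u + v - (u + v)) ≤ 1
      rw [sub_self, n_zero hN]; norm_num⟩
    ⟨⟨(-u, -v), by rw [n_neg hN, hu], by rw [n_neg hN, hv], by
        change N (-u - -v) = 1
        rw [show -u - -v = -(u - v) by abel, n_neg hN, huv], by simpa using hd⟩, by
      change 1 ≤ N (-u + -v - (u + v))
      have := sum_ge_one hN hu huv
      rw [show -u + -v - (u + v) = -((2 : ℝ) • (u + v)) by rw [two_smul]; abel, n_neg hN,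
        hN.smul_eq]
      norm_num
      linarith⟩
  obtain ⟨⟨⟨u', v'⟩, h1, h2, h3, _⟩, h⟩ := hr
  exact ⟨u', v', h1, h2, h3, h⟩

section maps
variable {f : ℝ × ℝ → ℝ × ℝ}

theorem rhomb_or (hN : IsNorm N) (hU : IsURTC N)
    (hf : ∀ x y : ℝ × ℝ, N (x - y) = 1 → N (f x - f y) = 1) (a : ℝ × ℝ)
    {u v : ℝ × ℝ} (hu : N u = 1) (hv : N v = 1) (huv : N (u - v) = 1) :
    f (a + u + v) = f a ∨ f (a + u + v) = f (a + u) + f (a + v) - f a := by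
  apply two_apex hN hU
  · exact hf _ _ (by rw [add_sub_add_left_eq_sub, huv])
  · exact hf _ _ (by rw [add_sub_cancel_left, hu])
  · exact hf _ _ (by rw [add_sub_cancel_left, hv])
  · exact hf _ _ (by rw [show a + u - (a + u + v) = -v by abel, n_neg hN, hv])
  · exact hf _ _ (by rw [show a + v - (a + u + v) = -u by abel, n_neg hN, hu])

theorem rhomb (hN : IsNorm N) (hU : IsURTC N)
    (hf : ∀ x y : ℝ × ℝ, N (x - y) = 1 → N (f x - f y) = 1) (a : ℝ × ℝ)
    {u v : ℝ × ℝ} (hu : N u = 1) (hv : N v = 1) (huv : N (u - v) = 1) :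
    f (a + u + v) = f (a + u) + f (a + v) - f a := by
  refine (rhomb_or hN hU hf a hu hv huv).resolve_left fun h => ?_
  obtain ⟨u', v', hu', hv', huv', hr⟩ := exists_rot hN hU hu hv huv
  have h1 : N (f (a + u' + v') - f a) = 1 := by
    rw [← h]
    apply hf
    rw [← hr]
    congr 1
    abel
  rcases rhomb_or hN hU hf a hu' hv' huv' with h2 | h2
  · rw [h2, sub_self, n_zero hN] at h1
    norm_num at h1
  · rw [h2] at h1
    apply sum_ne_one hN hU (u := f (a + u') - f a) (v := f (a + v') - f a)
    · exact hf _ _ (by rw [add_sub_cancel_left, hu'])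
    · exact hf _ _ (by rw [add_sub_cancel_left, hv'])
    · rw [sub_sub_sub_cancel_right]
      exact hf _ _ (by rw [add_sub_add_left_eq_sub, huv'])
    · rw [← h1]
      congr 1
      abel

theorem step (hN : IsNorm N) (hU : IsURTC N)
    (hf : ∀ x y : ℝ × ℝ, N (x - y) = 1 → N (f x - f y) = 1) (a : ℝ × ℝ)
    {u : ℝ × ℝ} (hu : N u = 1) : f (a + u + u) - f (a + u) = f (a + u) - f a := by
  obtain ⟨v, hv, hvu⟩ := exists_apex hN (ne_zero_of_unit hN hu) hu.le
  have huv : N (u - v) = 1 := by rw [n_comm hN, hvu]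
  have h1 := rhomb hN hU hf a hu hv huv
  have h2 := rhomb hN hU hf (a + v) hu huv (by rwa [sub_sub_cancel])
  rw [show a + v + u + (u - v) = a + u + u by abel, show a + v + (u - v) = a + u by abel,
    show a + v + u = a + u + v by abel, h1] at h2
  rw [h2]
  abel

theorem multi (hN : IsNorm N) (hU : IsURTC N)
    (hf : ∀ x y : ℝ × ℝ, N (x - y) = 1 → N (f x - f y) = 1) {u : ℝ × ℝ} (hu : N u = 1)
    (n : ℕ) : ∀ a : ℝ × ℝ, f (a + (n : ℝ) • u) = f a + (n : ℝ) • (f (a + u) - f a) := by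
  induction n with
  | zero => intro a; simp
  | succ k ih =>
    intro a
    have h := ih (a + u)
    rw [step hN hU hf a hu] at h
    push_cast
    rw [add_smul, add_smul, one_smul, one_smul,
      show a + ((k : ℝ) • u + u) = a + u + (k : ℝ) • u by abel, h]
    abel

theorem unit_case (hN : IsNorm N) (hU : IsURTC N)
    (hf : ∀ x y : ℝ × ℝ, N (x - y) = 1 → N (f x - f y) = 1) (n : ℕ) (hn : 0 < n)
    (x y : ℝ × ℝ) (hxy : N (x - y) = 1 / n) : N (f x - f y) = 1 / n := by
  have hn' : (0 : ℝ) < n := by exact_mod_cast hn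
  have hn1 : (1 : ℝ) ≤ n := by exact_mod_cast hn
  have hne : x - y ≠ 0 := by
    intro h
    rw [h, n_zero hN] at hxy
    have : (0 : ℝ) < 1 / n := by positivity
    linarith
  obtain ⟨c, hc, hcw⟩ := exists_apex hN hne (by
    rw [hxy, div_le_one hn']; exact hn1)
  -- the common centre is `x - c`
  have hx := multi hN hU hf hc n (x - c)
  have hy := multi hN hU hf hcw n (x - c)
  rw [show x - c + c = x by abel] at hx
  rw [show x - c + (c - (x - y)) = y by abel] at hy
  have h1 := hf (x - c + (n : ℝ) • c) (x - c + (n : ℝ) • (c - (x - y))) (by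
    rw [add_sub_add_left_eq_sub, ← smul_sub, sub_sub_cancel, hN.smul_eq, hxy, abs_of_pos hn']
    field_simp)
  rw [hx, hy, add_sub_add_left_eq_sub, ← smul_sub, sub_sub_sub_cancel_right, hN.smul_eq,
    abs_of_pos hn'] at h1
  rw [eq_div_iff hn'.ne', mul_comm]
  exact h1

end maps

end URTCAux

/-- For a URTC-norm, a map preserving distance `d` preserves distance `d / n` for
every positive integer `n`. -/
theorem preserves_fractions (N : ℝ × ℝ → ℝ) (hN : IsNorm N) (hU : IsURTC N)
    (d : ℝ) (hd : 0 < d) (φ : ℝ × ℝ → ℝ × ℝ)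
    (hφ : ∀ x y : ℝ × ℝ, N (x - y) = d → N (φ x - φ y) = d) :
    ∀ n : ℕ, 0 < n →
      ∀ x y : ℝ × ℝ, N (x - y) = d / n → N (φ x - φ y) = d / n := by
  intro n hn x y hxy
  have key : ∀ x y : ℝ × ℝ, N (d⁻¹ • x - d⁻¹ • y) = d⁻¹ * N (x - y) := by
    intro x y
    rw [← smul_sub, hN.smul_eq, abs_of_pos (inv_pos.2 hd)]
  have key2 : ∀ x y : ℝ × ℝ, N (d • x - d • y) = d * N (x - y) := by
    intro x y
    rw [← smul_sub, hN.smul_eq, abs_of_pos hd]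
  have h := URTCAux.unit_case (f := fun z => d⁻¹ • φ (d • z)) hN hU (by
    intro x y h
    rw [key, hφ _ _ (by rw [key2, h, mul_one]), inv_mul_cancel₀ hd.ne']) n hn
    (d⁻¹ • x) (d⁻¹ • y) (by
      rw [key, hxy]
      field_simp)
  simp only [smul_inv_smul₀ hd.ne'] at h
  rw [key] at h
  field_simp at h ⊢
  linarith
end
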